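/- For every integer a, ψ''(β^a R''_1) = 2^{2s} − 1 + 2^{3s}·ψ(ω^a D); consequently ψ''(β^a R''_1) = −2^{3s} + 2^{2s} − 1 if a mod M ∈ T_1, ψ''(β^a R''_1) = 2^{3s}(2^s − 1) + 2^{2s} − 1 if a mod M ∈ T_2, and ψ''(β^a R''_1) = −(2^s + 1)(2^{3s} − 2^s + 1) if a mod M ∈ T_3. -/

import Mathlib

noncomputable section

open scoped BigOperators

/-- `M = 2^{2s} + 2^s + 1`. -/
abbrev Mof (s : ℕ) : ℕ := 2 ^ (2 * s) + 2 ^ s + 1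

/-- The relative trace from `F` (of order `2^{3s}`) to its subfield `E` of order `2^s`:
`Tr_{F/E}(x) = x + x^{2^s} + x^{2^{2s}}`, viewed as a map `F → F`. -/
def trFE {F : Type*} [Field F] (s : ℕ) (x : F) : F :=
  x + x ^ (2 ^ s) + x ^ (2 ^ (2 * s))

/-- `ψ(x) = 1` if the absolute trace `Tr_{F/𝔽₂}(x) = 0`, and `-1` otherwise. -/
def psi (F : Type*) [Field F] [Algebra (ZMod 2) F] (x : F) : ℤ :=
  if Algebra.trace (ZMod 2) F x = 0 then 1 else -1

/-- `ψ(cS) = ∑_{x ∈ S} ψ(c·x)`. -/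
def psiSum (F : Type*) [Field F] [Algebra (ZMod 2) F] (c : F) (S : Set F) : ℤ :=
  ∑ᶠ x ∈ S, psi F (c * x)

/-- `D = {u ∈ F^× : Tr_{F/E}(u⁻¹) = 0}`. -/
def Dset (F : Type*) [Field F] (s : ℕ) : Set F :=
  {u | u ≠ 0 ∧ trFE s u⁻¹ = 0}

/-- `S_a = {u ∈ F^× : Tr_{F/E}(u^{2^s+1}) = 0 ∧ Tr_{F/E}(ω^a u) = 0}`. -/
def Sa {F : Type*} [Field F] (s : ℕ) (ω : F) (a : ℤ) : Set F :=
  {u | u ≠ 0 ∧ trFE s (u ^ (2 ^ s + 1)) = 0 ∧ trFE s (ω ^ a * u) = 0}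

/-- `T₁ ⊆ ℤ/Mℤ`: classes `a` with `|S_a| = 2^s - 1`. -/
def T1 {F : Type*} [Field F] (s : ℕ) (ω : F) : Set (ZMod (Mof s)) :=
  {x | (Sa s ω (x.val : ℤ)).ncard = 2 ^ s - 1}

/-- `T₂ ⊆ ℤ/Mℤ`: classes `a` with `|S_a| = 2(2^s - 1)`. -/
def T2 {F : Type*} [Field F] (s : ℕ) (ω : F) : Set (ZMod (Mof s)) :=
  {x | (Sa s ω (x.val : ℤ)).ncard = 2 * (2 ^ s - 1)}

/-- `T₃ ⊆ ℤ/Mℤ`: classes `a` with `|S_a| = 0`. -/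
def T3 {F : Type*} [Field F] (s : ℕ) (ω : F) : Set (ZMod (Mof s)) :=
  {x | (Sa s ω (x.val : ℤ)).ncard = 0}

/-- The cyclotomic class `C_i^{(M,K)} = {g^{i+Mt} : t ∈ ℤ}`. -/
def cyc {K : Type*} [Field K] (M : ℕ) (g : K) (i : ℤ) : Set K :=
  {x | ∃ t : ℤ, x = g ^ (i + (M : ℤ) * t)}

/-- `⋃_{i ∈ T} C_i^{(M,K)}` for a set `T ⊆ ℤ/Mℤ` of indices. -/
def Rclass {K : Type*} [Field K] (s : ℕ) (g : K) (T : Set (ZMod (Mof s))) : Set K :=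
  ⋃ i ∈ T, cyc (Mof s) g ((i.val : ℤ))

/-- The family `R_0 = {0}`, `R_k = ⋃_{i ∈ T_k} C_i^{(M,K)}`, `k = 1, 2, 3`. -/
def Rfam {F K : Type*} [Field F] [Field K] (s : ℕ) (ω : F) (g : K) : Fin 4 → Set K :=
  ![{0}, Rclass s g (T1 s ω), Rclass s g (T2 s ω), Rclass s g (T3 s ω)]

/-- Indicator `[P] = 1` if `P` holds, `0` otherwise. -/
def Ind (P : Prop) : ℤ := @ite ℤ P (Classical.propDecidable P) 1 0


set_option linter.unusedSectionVars false

section PartTwo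
variable {F : Type*} [Field F] [Algebra (ZMod 2) F]

theorem charTwo : CharP F 2 :=
  charP_of_injective_algebraMap (algebraMap (ZMod 2) F).injective 2

theorem addPow (k : ℕ) (x y : F) : (x + y) ^ (2 ^ k) = x ^ (2 ^ k) + y ^ (2 ^ k) := by
  have := charTwo (F := F)
  exact add_pow_char_pow x y 2 k

theorem addSelf (x : F) : x + x = 0 := by
  have := charTwo (F := F)
  exact CharTwo.add_self_eq_zero x

theorem psi_zero : psi F 0 = 1 := by simp [psi]

theorem psi_add (x y : F) : psi F (x + y) = psi F x * psi F y := by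
  unfold psi
  rw [map_add]
  generalize Algebra.trace (ZMod 2) F x = a
  generalize Algebra.trace (ZMod 2) F y = b
  revert a b
  decide

variable [Fintype F]

theorem trace_pow_two (k : ℕ) (x : F) :
    Algebra.trace (ZMod 2) F (x ^ (2 ^ k)) = Algebra.trace (ZMod 2) F x := by
  have h1 : ∀ y : F, Algebra.trace (ZMod 2) F (y ^ 2) = Algebra.trace (ZMod 2) F y := by
    intro y
    have := Algebra.trace_eq_of_algEquiv (FiniteField.frobeniusAlgEquivOfAlgebraic (ZMod 2) F) y
    simpa using this
  induction k with
  | zero => simp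
  | succ k ih => rw [pow_succ, pow_mul, h1, ih]

theorem psi_pow_two (k : ℕ) (x : F) : psi F (x ^ (2 ^ k)) = psi F x := by
  unfold psi; rw [trace_pow_two]

theorem trace_nondeg {a : F} (ha : a ≠ 0) : ∃ b : F, Algebra.trace (ZMod 2) F (a * b) ≠ 0 := by
  have htr := (traceForm_nondegenerate (ZMod 2) F).1 a
  simp_rw [Algebra.traceForm_apply] at htr
  by_contra! hf
  exact ha (htr hf)

open Classical in
theorem psi_ortho (d : F) : ∑ x : F, psi F (d * x) = if d = 0 then (Fintype.card F : ℤ) else 0 := by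
  split_ifs with h
  · simp [h, psi_zero]
  · obtain ⟨b, hb⟩ := trace_nondeg h
    have hb' : psi F (d * b) = -1 := by
      unfold psi
      rw [if_neg hb]
    have := Fintype.sum_equiv (Equiv.addRight b) (fun x => psi F (d * (x + b))) (fun x => psi F (d * x))
      (fun x => rfl)
    simp only [mul_add, psi_add, hb', ← Finset.sum_mul] at this
    linarith

variable (s : ℕ)

theorem tr_add (x y : F) : trFE s (x + y) = trFE s x + trFE s y := by
  unfold trFE; rw [addPow, addPow]; ring

theorem tr_zero : trFE s (0 : F) = 0 := by
  simp [trFE]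

theorem pow_q2 (x : F) : x ^ (2 ^ (2 * s)) = (x ^ (2 ^ s)) ^ (2 ^ s) := by
  rw [← pow_mul, ← pow_add]; congr 2; ring

theorem pow_q3 (hF : Fintype.card F = 2 ^ (3 * s)) (x : F) :
    ((x ^ (2 ^ s)) ^ (2 ^ s)) ^ (2 ^ s) = x := by
  have := FiniteField.pow_card x
  rw [hF] at this
  rw [← pow_mul, ← pow_mul, ← pow_add, ← pow_add]
  convert this using 3; ring

theorem tr_mem (hF : Fintype.card F = 2 ^ (3 * s)) (x : F) : (trFE s x) ^ (2 ^ s) = trFE s x := by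
  unfold trFE
  rw [addPow, addPow, pow_q2, pow_q3 s hF]; ring

theorem tr_pow (hF : Fintype.card F = 2 ^ (3 * s)) (x : F) : trFE s (x ^ (2 ^ s)) = trFE s x := by
  unfold trFE
  rw [pow_q2, pow_q2, pow_q3 s hF]; ring

theorem tr_smul {e : F} (he : e ^ (2 ^ s) = e) (x : F) : trFE s (e * x) = e * trFE s x := by
  unfold trFE
  rw [mul_pow, mul_pow, pow_q2, he, he]; ring

theorem tr_E {e : F} (he : e ^ (2 ^ s) = e) : trFE s e = e := by
  unfold trFE
  rw [pow_q2, he, he, addSelf, zero_add]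

theorem psi_tr (x : F) : psi F (trFE s x) = psi F x := by
  unfold trFE
  rw [psi_add, psi_add, psi_pow_two, psi_pow_two]
  unfold psi; split_ifs <;> norm_num

open Classical in
/-- The subfield `E` as a finset. -/
def Efin (F : Type*) [Field F] [Fintype F] (s : ℕ) : Finset F := {e : F | e ^ (2 ^ s) = e}

theorem mem_Efin {e : F} : e ∈ Efin F s ↔ e ^ (2 ^ s) = e := by simp [Efin]

theorem card_Efin (hs : 1 ≤ s) (hF : Fintype.card F = 2 ^ (3 * s)) : (Efin F s).card = 2 ^ s := by
  classical
  have hq : 2 ≤ 2 ^ s := by calc 2 = 2 ^ 1 := rfl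
    _ ≤ 2 ^ s := Nat.pow_le_pow_right (by norm_num) hs
  obtain ⟨g, hg⟩ := IsCyclic.exists_ofOrder_eq_natCard (α := Fˣ)
  have hord : orderOf g = (2 ^ s - 1) * Mof s := by
    rw [hg, Nat.card_eq_fintype_card, Fintype.card_units, hF]
    obtain ⟨k, hk⟩ : ∃ k, 2 ^ s = k + 1 := ⟨2 ^ s - 1, by omega⟩
    unfold Mof
    rw [mul_comm 3 s, pow_mul, mul_comm 2 s, pow_mul, hk]
    simp only [Nat.add_sub_cancel]
    rw [Nat.sub_eq_iff_eq_add (Nat.one_le_pow _ _ (by omega))]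
    ring
  have hprim : IsPrimitiveRoot (g : F) (orderOf g) := by
    rw [← orderOf_units]; exact IsPrimitiveRoot.orderOf _
  have hprim2 : IsPrimitiveRoot ((g : F) ^ Mof s) (2 ^ s - 1) :=
    hprim.pow (by rw [hord]; exact Nat.mul_pos (by omega) (Nat.succ_pos _)) (by rw [hord, mul_comm])
  have hE : Efin F s = insert 0 (Polynomial.nthRootsFinset (2 ^ s - 1) (1 : F)) := by
    ext x
    rw [mem_Efin, Finset.mem_insert, Polynomial.mem_nthRootsFinset (by omega)]
    by_cases hx : x = 0
    · subst hx; simp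
    · simp only [hx, false_or]
      have : x ^ (2 ^ s) = x ^ (2 ^ s - 1) * x := by rw [← pow_succ]; congr 1; omega
      rw [this]
      exact mul_eq_right₀ hx
  rw [hE, Finset.card_insert_of_notMem, hprim2.card_nthRootsFinset]
  · omega
  · rw [Polynomial.mem_nthRootsFinset (by omega), zero_pow (by omega)]; simp

theorem mul_mem_E {a b : F} (ha : a ^ (2 ^ s) = a) (hb : b ^ (2 ^ s) = b) : (a * b) ^ (2 ^ s) = a * b := by
  rw [mul_pow, ha, hb]

theorem inv_mem_E {a : F} (ha : a ^ (2 ^ s) = a) : (a⁻¹) ^ (2 ^ s) = a⁻¹ := by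
  rw [inv_pow, ha]

open Classical in
theorem sumE (hs : 1 ≤ s) (hF : Fintype.card F = 2 ^ (3 * s)) (x : F) :
    ∑ e ∈ Efin F s, psi F (e * x) = if trFE s x = 0 then 2 ^ s else 0 := by
  have hred : ∀ e ∈ Efin F s, psi F (e * x) = psi F (e * trFE s x) := by
    intro e he
    rw [← psi_tr s (e * x), tr_smul s ((mem_Efin s).1 he)]
  rw [Finset.sum_congr rfl hred]
  split_ifs with h
  · rw [h]; simp [psi_zero, card_Efin s hs hF]
  · obtain ⟨b, hb⟩ := trace_nondeg (one_ne_zero : (1 : F) ≠ 0)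
    have hb' : psi F b = -1 := by
      unfold psi
      rw [if_neg (by simpa using hb)]
    set y := trFE s x with hy
    have hyE : y ^ (2 ^ s) = y := tr_mem s hF x
    set z := trFE s b * y⁻¹ with hz
    have hzE : z ^ (2 ^ s) = z := mul_mem_E s (tr_mem s hF b) (inv_mem_E s hyE)
    have hzpsi : psi F (z * y) = -1 := by
      rw [hz, inv_mul_cancel_right₀ h, psi_tr, hb']
    have hshift : ∑ e ∈ Efin F s, psi F ((e + z) * y) = ∑ e ∈ Efin F s, psi F (e * y) := by
      apply Finset.sum_nbij' (fun e => e + z) (fun e => e + z)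
      · intro e he; rw [mem_Efin] at *; rw [addPow, he, hzE]
      · intro e he; rw [mem_Efin] at *; rw [addPow, he, hzE]
      · intro e _; rw [add_assoc, addSelf, add_zero]
      · intro e _; rw [add_assoc, addSelf, add_zero]
      · intro e _; rfl
    simp only [add_mul, psi_add, hzpsi, ← Finset.sum_mul] at hshift
    linarith

open Classical in
theorem hyper_gen (hs : 1 ≤ s) (hF : Fintype.card F = 2 ^ (3 * s)) (c d : F) (hd : d ≠ 0) :
    ∑ u : F with trFE s (d * u) = 0, psi F (c * u) =
      if (c / d) ^ (2 ^ s) = c / d then 2 ^ (2 * s) else 0 := by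
  have hq : (2 : ℤ) ^ s ≠ 0 := by positivity
  apply mul_left_cancel₀ hq
  have : (2 : ℤ) ^ s * ∑ u : F with trFE s (d * u) = 0, psi F (c * u) =
      ∑ u : F, ∑ e ∈ Efin F s, psi F ((e * d + c) * u) := by
    rw [Finset.sum_filter, Finset.mul_sum]
    apply Finset.sum_congr rfl
    intro u _
    have : ∀ e ∈ Efin F s, psi F ((e * d + c) * u) = psi F (e * (d * u)) * psi F (c * u) := by
      intro e _; rw [← psi_add]; congr 1; ring
    rw [Finset.sum_congr rfl this, ← Finset.sum_mul, sumE s hs hF]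
    split_ifs <;> simp
  rw [this, Finset.sum_comm]
  simp only [psi_ortho]
  have hiff : ∀ e : F, e * d + c = 0 ↔ e = c / d := by
    intro e
    rw [eq_div_iff hd]
    constructor
    · intro h; linear_combination h - addSelf c
    · intro h; linear_combination h + addSelf c
  simp only [hiff]
  rw [Finset.sum_ite_eq']
  simp only [mem_Efin, hF]
  split_ifs
  · push_cast; ring
  · simp

open Classical in
theorem hyper_card (hs : 1 ≤ s) (hF : Fintype.card F = 2 ^ (3 * s)) (d : F) (hd : d ≠ 0) :
    Finset.card {u : F | trFE s (d * u) = 0} = 2 ^ (2 * s) := by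
  have := hyper_gen s hs hF 0 d hd
  simp [psi_zero] at this
  exact_mod_cast this

end PartTwo

section PartThree
variable {F : Type*} [Field F] [Algebra (ZMod 2) F] [Fintype F] (s : ℕ)

theorem Q_eq (u : F) :
    trFE s (u ^ (2 ^ s + 1)) = u * u ^ (2 ^ s) + u ^ (2 ^ s) * (u ^ (2 ^ s)) ^ (2 ^ s)
      + (u ^ (2 ^ s)) ^ (2 ^ s) * ((u ^ (2 ^ s)) ^ (2 ^ s)) ^ (2 ^ s) := by
  unfold trFE
  rw [pow_q2, pow_succ, mul_pow, mul_pow]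
  ring

theorem Q_inv (hF : Fintype.card F = 2 ^ (3 * s)) {u : F} (hu : u ≠ 0) :
    trFE s (u ^ (2 ^ s + 1)) = 0 ↔ trFE s u⁻¹ = 0 := by
  have h : trFE s (u ^ (2 ^ s + 1)) = (u * u ^ (2 ^ s) * (u ^ (2 ^ s)) ^ (2 ^ s)) * trFE s u⁻¹ := by
    rw [Q_eq, pow_q3 s hF]
    unfold trFE
    rw [pow_q2, inv_pow, inv_pow]
    have h1 : u ^ (2 ^ s) ≠ 0 := pow_ne_zero _ hu
    generalize u ^ (2 ^ s) = b at *
    have h2 : b ^ (2 ^ s) ≠ 0 := pow_ne_zero _ h1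
    generalize b ^ (2 ^ s) = c at *
    field_simp
    ring
  have h0 : u * u ^ (2 ^ s) * (u ^ (2 ^ s)) ^ (2 ^ s) ≠ 0 := by positivity
  rw [h, mul_eq_zero]
  tauto

open Classical in
/-- The finset version of `S_a`, with `d = ω^a`. -/
def Sfin (s : ℕ) (d : F) : Finset F :=
  {u : F | u ≠ 0 ∧ trFE s (u ^ (2 ^ s + 1)) = 0 ∧ trFE s (d * u) = 0}

theorem mem_Sfin {d u : F} : u ∈ Sfin s d ↔
    u ≠ 0 ∧ trFE s (u ^ (2 ^ s + 1)) = 0 ∧ trFE s (d * u) = 0 := by simp [Sfin]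

theorem two_le_q (hs : 1 ≤ s) : 2 ≤ 2 ^ s := by
  calc 2 = 2 ^ 1 := rfl
    _ ≤ 2 ^ s := Nat.pow_le_pow_right (by norm_num) hs

theorem Sfin_tangent (hs : 1 ≤ s) (hF : Fintype.card F = 2 ^ (3 * s)) {d : F} (hd : d ≠ 0)
    (htr : trFE s d = 0) : (Sfin s d).card = 2 ^ s - 1 := by
  classical
  have hQE : ∀ u e : F, e ^ (2 ^ s) = e →
      trFE s ((u + e) ^ (2 ^ s + 1)) = trFE s (u ^ (2 ^ s + 1)) + e ^ 2 := by
    intro u e he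
    rw [Q_eq, Q_eq, addPow, he, addPow, he, addPow, he, pow_q3 s hF]
    linear_combination (e * (u + u ^ (2 ^ s) + (u ^ (2 ^ s)) ^ (2 ^ s)) + e ^ 2) * addSelf (1 : F)
  have hTE : ∀ e : F, e ^ (2 ^ s) = e → trFE s (d * e) = 0 := by
    intro e he
    rw [mul_comm, tr_smul s he, htr, mul_zero]
  set L0 : Finset F := {u : F | trFE s (u ^ (2 ^ s + 1)) = 0 ∧ trFE s (d * u) = 0} with hL0
  have hcard : (L0 ×ˢ Efin F s).card = Finset.card {u : F | trFE s (d * u) = 0} := by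
    apply Finset.card_bij (fun p _ => p.1 + p.2)
    · rintro ⟨u, e⟩ h
      simp only [hL0, Finset.mem_product, Finset.mem_filter, Finset.mem_univ, true_and, mem_Efin] at h ⊢
      rw [mul_add, tr_add, h.1.2, hTE e h.2, add_zero]
    · rintro ⟨u, e⟩ h ⟨u', e'⟩ h' heq
      simp only [hL0, Finset.mem_product, Finset.mem_filter, Finset.mem_univ, true_and, mem_Efin] at h h' heq
      have h1 := hQE u e h.2
      have h2 := hQE u' e' h'.2
      rw [heq, h2, h.1.1, h'.1.1] at h1
      have h3 : (e' - e) ^ 2 = 0 := by linear_combination h1 - (e' * e - e ^ 2) * addSelf (1 : F)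
      have h4 : e' = e := sub_eq_zero.1 (pow_eq_zero_iff (two_ne_zero) |>.1 h3)
      subst h4
      rw [add_right_cancel heq]
    · intro v hv
      simp only [Finset.mem_filter, Finset.mem_univ, true_and] at hv
      set x := trFE s (v ^ (2 ^ s + 1)) with hx
      have hxE : x ^ (2 ^ s) = x := tr_mem s hF _
      set e := x ^ (2 ^ (s - 1)) with he
      have he2 : e ^ 2 = x := by
        rw [he, ← pow_mul, ← pow_succ, Nat.sub_add_cancel hs, hxE]
      have heE : e ^ (2 ^ s) = e := by
        rw [he, ← pow_mul, mul_comm, pow_mul, hxE]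
      refine ⟨(v + e, e), ?_, ?_⟩
      · simp only [hL0, Finset.mem_product, Finset.mem_filter, Finset.mem_univ, true_and, mem_Efin]
        refine ⟨⟨?_, ?_⟩, heE⟩
        · rw [hQE v e heE, he2, ← hx, addSelf]
        · rw [mul_add, tr_add, hv, hTE e heE, add_zero]
      · simp only [add_assoc, addSelf, add_zero]
  rw [Finset.card_product, card_Efin s hs hF, hyper_card s hs hF d hd, mul_comm 2 s, pow_mul, sq] at hcard
  have hL : L0.card = 2 ^ s := Nat.eq_of_mul_eq_mul_right (by positivity) hcard
  have hSL : Sfin s d = L0.erase 0 := by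
    ext u
    simp [mem_Sfin, hL0]
  rw [hSL, Finset.card_erase_of_mem, hL]
  simp [hL0, tr_zero]

theorem tr_nondeg {k : F} (h : ∀ z : F, trFE s (k * z) = 0) : k = 0 := by
  by_contra hk
  obtain ⟨b, hb⟩ := trace_nondeg hk
  have h1 : psi F (k * b) = 1 := by rw [← psi_tr s, h b, psi_zero]
  unfold psi at h1
  rw [if_neg hb] at h1
  norm_num at h1

theorem Sfin_not_tangent (hs : 1 ≤ s) (hF : Fintype.card F = 2 ^ (3 * s)) {d : F} (hd : d ≠ 0)
    (htr : trFE s d ≠ 0) : (Sfin s d).card ≠ 2 ^ s - 1 := by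
  classical
  intro hcard
  have hq := two_le_q s hs
  obtain ⟨u, hu⟩ : (Sfin s d).Nonempty := by
    rw [← Finset.card_pos, hcard]; omega
  obtain ⟨hu0, huQ, huT⟩ := (mem_Sfin s).1 hu
  -- the multiples of u exhaust S
  have himg : ((Efin F s).erase 0).image (fun e => e * u) = Sfin s d := by
    apply Finset.eq_of_subset_of_card_le
    · intro w hw
      obtain ⟨e, he, rfl⟩ := Finset.mem_image.1 hw
      rw [Finset.mem_erase, mem_Efin] at he
      rw [mem_Sfin]
      refine ⟨mul_ne_zero he.1 hu0, ?_, ?_⟩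
      · rw [mul_pow, tr_smul s, huQ, mul_zero]
        rw [pow_succ, mul_pow, he.2, he.2]
      · rw [mul_left_comm, tr_smul s he.2, huT, mul_zero]
    · rw [Finset.card_image_of_injective _ (mul_left_injective₀ hu0), hcard,
        Finset.card_erase_of_mem, card_Efin s hs hF]
      rw [mem_Efin, zero_pow (by positivity)]
  -- polar form
  set b := u ^ (2 ^ s) with hb
  set c := b ^ (2 ^ s) with hc
  have hca : c ^ (2 ^ s) = u := by rw [hc, hb, pow_q3 s hF]
  obtain ⟨v, hvT, hvB⟩ : ∃ v, trFE s (d * v) = 0 ∧ trFE s ((b + c) * v) ≠ 0 := by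
    by_contra! hall
    set h := (b + c) / d with hh
    have h1 : ∀ z, trFE s ((h + (h ^ (2 ^ s)) ^ (2 ^ s)) * z) = 0 := by
      intro z
      have := hall ((z + z ^ (2 ^ s)) / d) (by
        rw [mul_div_cancel₀ _ hd, tr_add, tr_pow s hF, addSelf])
      have e1 : (b + c) * ((z + z ^ (2 ^ s)) / d) = h * z + h * z ^ (2 ^ s) := by rw [hh]; ring
      have e2 : trFE s (h * z ^ (2 ^ s)) = trFE s ((h ^ (2 ^ s)) ^ (2 ^ s) * z) := by
        rw [← tr_pow s hF (h * z ^ (2 ^ s)), ← tr_pow s hF ((h * z ^ (2 ^ s)) ^ (2 ^ s)), mul_pow, mul_pow,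
          pow_q3 s hF]
      rw [e1, tr_add, e2, ← tr_add] at this
      rw [add_mul]; exact this
    have h2 := tr_nondeg s h1
    have h3 : (h ^ (2 ^ s)) ^ (2 ^ s) = h := by
      linear_combination h2 - addSelf h
    have h4 : h ^ (2 ^ s) = h := by
      have := pow_q3 s hF h
      rw [h3] at this; exact this
    have h5 : b + c = h * d := by rw [hh]; field_simp
    have h6 : trFE s (b + c) = 0 := by rw [tr_add, hc, tr_pow s hF b, addSelf]
    rw [h5, tr_smul s h4] at h6
    have h7 : h = 0 := (mul_eq_zero.1 h6).resolve_right htr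
    rw [h7, zero_mul] at h5
    have h8 : b = c := by linear_combination h5 - addSelf c
    have h9 : c = u := by rw [← hca, ← h8, ← hc, h8]
    have h10 : u ^ (2 ^ s) = u := by rw [← hb, h8, h9]
    rw [mul_comm, tr_smul s h10] at huT
    exact (mul_ne_zero hu0 htr) huT
  set B := trFE s ((b + c) * v) with hB
  set A := trFE s (v ^ (2 ^ s + 1)) with hA
  have hAE : A ^ (2 ^ s) = A := tr_mem s hF _
  have hBE : B ^ (2 ^ s) = B := tr_mem s hF _
  have hBform : B = (b + c) * v + (c + u) * v ^ (2 ^ s) + (u + b) * (v ^ (2 ^ s)) ^ (2 ^ s) := by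
    rw [hB]; unfold trFE
    rw [pow_q2, mul_pow, mul_pow, addPow, ← hc, hca, addPow, hca, ← hb]
  have hAform := Q_eq s v
  rw [← hA, pow_q3 s hF] at hAform
  have huform := Q_eq s u
  rw [huQ, ← hb, ← hc, hca] at huform
  have hw : A * u + B * v ∈ Sfin s d := by
    rw [mem_Sfin]
    refine ⟨?_, ?_, ?_⟩
    · intro h0
      have hv : v = (A / B) * u := by
        field_simp; linear_combination h0 - A * addSelf u
      have hk : (A / B) ^ (2 ^ s) = A / B := by rw [div_pow, hAE, hBE]
      apply hvB
      rw [hBform, hv, mul_pow, mul_pow, hk, hk, ← hb, ← hc]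
      linear_combination (A / B * (b * u + c * u + c * b)) * addSelf (1 : F)
    · rw [Q_eq, pow_q3 s hF, addPow, mul_pow, mul_pow, hAE, hBE, addPow, mul_pow, mul_pow, hAE, hBE,
        ← hb, ← hc]
      linear_combination -A ^ 2 * huform - B ^ 2 * hAform - A * B * hBform + A * B ^ 2 * addSelf (1 : F)
    · rw [mul_add, mul_left_comm, mul_left_comm d B, tr_add, tr_smul s hAE, tr_smul s hBE, huT, hvT]
      simp
  rw [← himg] at hw
  obtain ⟨e, he, hew⟩ := Finset.mem_image.1 hw
  rw [Finset.mem_erase, mem_Efin] at he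
  have hv : v = ((e - A) / B) * u := by
    field_simp; linear_combination -hew
  have hk : ((e - A) / B) ^ (2 ^ s) = (e - A) / B := by
    have : e - A = e + A := by linear_combination -addSelf A
    rw [this, div_pow, addPow, hAE, hBE, he.2]
  apply hvB
  rw [hBform, hv, mul_pow, mul_pow, hk, hk, ← hb, ← hc]
  linear_combination ((e - A) / B * (b * u + c * u + c * b)) * addSelf (1 : F)

theorem Sfin_iff (hs : 1 ≤ s) (hF : Fintype.card F = 2 ^ (3 * s)) {d : F} (hd : d ≠ 0) :
    (Sfin s d).card = 2 ^ s - 1 ↔ trFE s d = 0 :=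
  ⟨fun h => by_contra fun h' => Sfin_not_tangent s hs hF hd h' h, Sfin_tangent s hs hF hd⟩

open Classical in
theorem psiSum_eq (c : F) (S : Set F) : psiSum F c S = ∑ x : F with x ∈ S, psi F (c * x) := by
  unfold psiSum
  simp only [finsum_eq_sum_of_fintype, finsum_eq_if, Finset.sum_filter]

open Classical in
theorem card_D (hs : 1 ≤ s) (hF : Fintype.card F = 2 ^ (3 * s)) :
    (Finset.card {x : F | x ∈ Dset F s} : ℤ) = 2 ^ (2 * s) - 1 := by
  have h := hyper_card s hs hF (1 : F) one_ne_zero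
  have h0 : (0 : F) ∈ ({u : F | trFE s (1 * u) = 0} : Finset F) := by simp [tr_zero]
  have h1 : Finset.card {x : F | x ∈ Dset F s} = Finset.card (({u : F | trFE s (1 * u) = 0} : Finset F).erase 0) := by
    apply Finset.card_nbij' (fun x => x⁻¹) (fun x => x⁻¹)
    · intro x hx
      have hx' : x ≠ 0 ∧ trFE s x⁻¹ = 0 := (Finset.mem_filter.1 hx).2
      simpa using hx'.symm
    · intro x hx
      have hx' : trFE s x = 0 ∧ x ≠ 0 := by simpa using hx
      refine Finset.mem_filter.2 ⟨Finset.mem_univ _, inv_ne_zero hx'.2, ?_⟩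
      rw [inv_inv]; exact hx'.1
    · intro x _; simp
    · intro x _; simp
  rw [h1, Finset.card_erase_of_mem h0, h, Nat.cast_sub (Nat.one_le_two_pow)]
  push_cast; rfl

theorem sumD (hs : 1 ≤ s) (hF : Fintype.card F = 2 ^ (3 * s)) (d : F) :
    (2 ^ s - 1) * psiSum F d (Dset F s) = 2 ^ s * ((Sfin s d).card : ℤ) - (2 ^ (2 * s) - 1) := by
  classical
  rw [psiSum_eq]
  set D : Finset F := {x : F | x ∈ Dset F s} with hD
  have memD : ∀ x, x ∈ D ↔ x ≠ 0 ∧ trFE s x⁻¹ = 0 := by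
    intro x
    rw [hD, Finset.mem_filter]
    simp only [Finset.mem_univ, true_and]
    rfl
  have hE0 : (0 : F) ∈ Efin F s := by rw [mem_Efin, zero_pow (by positivity)]
  have hL : (2 ^ s - 1) * ∑ x ∈ D, psi F (d * x) = ∑ e ∈ (Efin F s).erase 0, ∑ x ∈ D, psi F (e * (d * x)) := by
    have : ∀ e ∈ (Efin F s).erase 0, ∑ x ∈ D, psi F (e * (d * x)) = ∑ x ∈ D, psi F (d * x) := by
      intro e he
      rw [Finset.mem_erase, mem_Efin] at he
      apply Finset.sum_nbij' (fun x => e * x) (fun x => e⁻¹ * x)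
      · intro x hx
        rw [memD] at hx ⊢
        refine ⟨mul_ne_zero he.1 hx.1, ?_⟩
        rw [mul_inv, tr_smul s (inv_mem_E s he.2), hx.2, mul_zero]
      · intro x hx
        rw [memD] at hx ⊢
        refine ⟨mul_ne_zero (inv_ne_zero he.1) hx.1, ?_⟩
        rw [mul_inv, inv_inv, tr_smul s he.2, hx.2, mul_zero]
      · intro x _; field_simp [he.1]
      · intro x _; field_simp [he.1]
      · intro x _; congr 1; ring
    rw [Finset.sum_congr rfl this, Finset.sum_const, Finset.card_erase_of_mem hE0, card_Efin s hs hF,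
      nsmul_eq_mul, Nat.cast_sub Nat.one_le_two_pow]
    push_cast; rfl
  rw [hL, Finset.sum_comm]
  have h2 : ∀ x ∈ D, ∑ e ∈ (Efin F s).erase 0, psi F (e * (d * x)) =
      2 ^ s * (if trFE s (d * x) = 0 then 1 else 0) - 1 := by
    intro x _
    have := Finset.add_sum_erase (Efin F s) (fun e => psi F (e * (d * x))) hE0
    rw [sumE s hs hF] at this
    simp only [zero_mul, psi_zero] at this
    split_ifs at this ⊢ <;> linarith
  rw [Finset.sum_congr rfl h2, Finset.sum_sub_distrib, ← Finset.mul_sum, ← Finset.sum_filter]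
  simp only [Finset.sum_const, nsmul_eq_mul, mul_one]
  rw [card_D s hs hF]
  congr 4
  ext x
  rw [Finset.mem_filter, memD, mem_Sfin]
  constructor
  · rintro ⟨⟨h1, h2⟩, h3⟩; exact ⟨h1, (Q_inv s hF h1).2 h2, h3⟩
  · rintro ⟨h1, h2, h3⟩; exact ⟨⟨h1, (Q_inv s hF h1).1 h2⟩, h3⟩

end PartThree

open Finset in
open Classical in
theorem aux_perm {F : Type*} [Field F] {r₁ r₂ r₃ u₁ u₂ u₃ : F}
    (h1 : u₁ + u₂ + u₃ = r₁ + r₂ + r₃)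
    (h2 : u₁ * u₂ + u₂ * u₃ + u₁ * u₃ = r₁ * r₂ + r₂ * r₃ + r₁ * r₃)
    (h3 : u₁ * u₂ * u₃ = r₁ * r₂ * r₃) :
    (u₁ = r₁ ∧ u₂ = r₂ ∧ u₃ = r₃) ∨ (u₁ = r₁ ∧ u₂ = r₃ ∧ u₃ = r₂) ∨
    (u₁ = r₂ ∧ u₂ = r₁ ∧ u₃ = r₃) ∨ (u₁ = r₂ ∧ u₂ = r₃ ∧ u₃ = r₁) ∨
    (u₁ = r₃ ∧ u₂ = r₁ ∧ u₃ = r₂) ∨ (u₁ = r₃ ∧ u₂ = r₂ ∧ u₃ = r₁) := by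
  have key : (u₁ - r₁) * (u₁ - r₂) * (u₁ - r₃) = 0 := by
    linear_combination u₁ ^ 2 * h1 - u₁ * h2 + h3
  have quad : ∀ {a b c d : F}, a + b = c + d → a * b = c * d → (a = c ∧ b = d) ∨ (a = d ∧ b = c) := by
    intro a b c d hs hp
    have : (a - c) * (a - d) = 0 := by linear_combination a * hs - hp
    rcases mul_eq_zero.1 this with h | h
    · left; have h' := sub_eq_zero.1 h; exact ⟨h', by linear_combination hs - h⟩
    · right; have h' := sub_eq_zero.1 h; exact ⟨h', by linear_combination hs - h⟩
  rcases mul_eq_zero.1 key with h | h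
  · rcases mul_eq_zero.1 h with h | h
    · have h' := sub_eq_zero.1 h
      have hs : u₂ + u₃ = r₂ + r₃ := by linear_combination h1 - h
      rcases quad hs (by rw [h'] at h2; linear_combination h2 - r₁ * hs) with h | h <;> simp [h', h.1, h.2]
    · have h' := sub_eq_zero.1 h
      have hs : u₂ + u₃ = r₁ + r₃ := by linear_combination h1 - h
      rcases quad hs (by rw [h'] at h2; linear_combination h2 - r₂ * hs) with h | h <;> simp [h', h.1, h.2]
  · have h' := sub_eq_zero.1 h
    have hs : u₂ + u₃ = r₁ + r₂ := by linear_combination h1 - h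
    rcases quad hs (by rw [h'] at h2; linear_combination h2 - r₃ * hs) with h | h <;> simp [h', h.1, h.2]

open Finset in
open Classical in
theorem aux_split {F : Type*} [Field F] [Fintype F] (r₁ r₂ r₃ : F) :
    (3 * #{x : F | x ^ 3 - (r₁ + r₂ + r₃) * x ^ 2 + (r₁ * r₂ + r₂ * r₃ + r₁ * r₃) * x - r₁ * r₂ * r₃ = 0} : ℤ)
      + (if r₁ = r₂ ∧ r₁ = r₃ then 1 else 0) =
    #{p : F × F × F | p.1 + p.2.1 + p.2.2 = r₁ + r₂ + r₃ ∧
      p.1 * p.2.1 + p.2.1 * p.2.2 + p.1 * p.2.2 = r₁ * r₂ + r₂ * r₃ + r₁ * r₃ ∧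
      p.1 * p.2.1 * p.2.2 = r₁ * r₂ * r₃} + 3 := by
  have e1 : ({x : F | x ^ 3 - (r₁ + r₂ + r₃) * x ^ 2 + (r₁ * r₂ + r₂ * r₃ + r₁ * r₃) * x - r₁ * r₂ * r₃ = 0} : Finset F)
      = {r₁, r₂, r₃} := by
    ext x
    have : x ^ 3 - (r₁ + r₂ + r₃) * x ^ 2 + (r₁ * r₂ + r₂ * r₃ + r₁ * r₃) * x - r₁ * r₂ * r₃ =
      (x - r₁) * (x - r₂) * (x - r₃) := by ring
    rw [mem_filter, this]
    simp [sub_eq_zero, or_assoc]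
  have e2 : ({p : F × F × F | p.1 + p.2.1 + p.2.2 = r₁ + r₂ + r₃ ∧
      p.1 * p.2.1 + p.2.1 * p.2.2 + p.1 * p.2.2 = r₁ * r₂ + r₂ * r₃ + r₁ * r₃ ∧
      p.1 * p.2.1 * p.2.2 = r₁ * r₂ * r₃} : Finset (F × F × F)) =
      {(r₁, r₂, r₃), (r₁, r₃, r₂), (r₂, r₁, r₃), (r₂, r₃, r₁), (r₃, r₁, r₂), (r₃, r₂, r₁)} := by
    ext ⟨u, v, w⟩
    simp only [mem_filter, mem_univ, true_and, mem_insert, mem_singleton, Prod.mk.injEq]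
    constructor
    · rintro ⟨h1, h2, h3⟩; exact aux_perm h1 h2 h3
    · rintro (⟨rfl, rfl, rfl⟩ | ⟨rfl, rfl, rfl⟩ | ⟨rfl, rfl, rfl⟩ | ⟨rfl, rfl, rfl⟩ | ⟨rfl, rfl, rfl⟩ | ⟨rfl, rfl, rfl⟩) <;>
        refine ⟨by ring, by ring, by ring⟩
  rw [e1, e2]
  by_cases h12 : r₁ = r₂
  · subst h12
    by_cases h13 : r₁ = r₃
    · subst h13; simp
    · have h31 : r₃ ≠ r₁ := Ne.symm h13
      simp [h13, h31]
  · have h21 : r₂ ≠ r₁ := Ne.symm h12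
    by_cases h13 : r₁ = r₃
    · subst h13
      simp [h12, h21]
    · have h31 : r₃ ≠ r₁ := Ne.symm h13
      by_cases h23 : r₂ = r₃
      · subst h23
        simp [h12, h21]
      · have h32 : r₃ ≠ r₂ := Ne.symm h23
        simp [h12, h21, h13, h31, h23, h32]

open Polynomial in
theorem exists_root_ext {F H : Type*} [Field F] [Fintype F] [Field H] [Fintype H] [Algebra F H]
    (hc : Module.finrank F H = 3) (t e n : F)
    (hno : ∀ x : F, x ^ 3 - t * x ^ 2 + e * x - n ≠ 0) :
    ∃ y : H, y ^ 3 - algebraMap F H t * y ^ 2 + algebraMap F H e * y - algebraMap F H n = 0 := by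
  set P : F[X] := X ^ 3 - C t * X ^ 2 + C e * X - C n with hP
  have hd : P.natDegree = 3 := by rw [hP]; compute_degree!
  have hirr : Irreducible P := by
    rw [irreducible_iff_roots_eq_zero_of_degree_le_three (by omega) (by omega)]
    apply Multiset.eq_zero_of_forall_notMem
    intro a ha
    have := (mem_roots'.1 ha).2
    apply hno a
    simpa [hP] using this
  have : Fact (Irreducible P) := ⟨hirr⟩
  have : Module.Finite F (AdjoinRoot P) := (AdjoinRoot.powerBasis hirr.ne_zero).finite
  have : Finite (AdjoinRoot P) := Module.finite_of_finite F
  have hfr : Module.finrank F (AdjoinRoot P) = 3 := by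
    rw [(AdjoinRoot.powerBasis hirr.ne_zero).finrank, AdjoinRoot.powerBasis_dim, hd]
  obtain ⟨g⟩ := FiniteField.nonempty_algHom_of_finrank_dvd (F := F) (K := AdjoinRoot P) (L := H) (by rw [hfr, hc])
  refine ⟨g (AdjoinRoot.root P), ?_⟩
  have h0 : aeval (g (AdjoinRoot.root P)) P = 0 := by
    rw [aeval_algHom_apply, AdjoinRoot.aeval_eq, AdjoinRoot.mk_self, map_zero]
  simpa [hP] using h0

section DH
variable {F H : Type*} [Field F] [Fintype F] [Field H] [Fintype H] [Algebra F H]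

theorem frob_fix (y : H) (hy : y ^ Fintype.card F = y) : ∃ x : F, algebraMap F H x = y := by
  have : y ∈ Set.range (algebraMap F H) := by
    rw [IsGalois.mem_range_algebraMap_iff_fixed]
    intro g
    obtain ⟨p, hp⟩ := CharP.exists F
    have : Fact p.Prime := ⟨CharP.char_is_prime F p⟩
    obtain ⟨n, hn⟩ := FiniteField.exists_forall_apply_eq_pow F p H g
    rw [hn]
    clear hn
    rw [Nat.card_eq_fintype_card]
    induction n with
    | zero => simp
    | succ k ih => rw [pow_succ, pow_mul, ih, hy]
  exact this

theorem frob3 (hc : Module.finrank F H = 3) (y : H) :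
    FiniteField.frobeniusAlgHom F H (FiniteField.frobeniusAlgHom F H (FiniteField.frobeniusAlgHom F H y)) = y := by
  have h : Fintype.card H = Fintype.card F ^ 3 := by rw [Module.card_eq_pow_finrank (K := F), hc]
  have := FiniteField.pow_card y
  rw [h] at this
  simp only [FiniteField.coe_frobeniusAlgHom]
  rw [← pow_mul, ← pow_mul]
  convert this using 2
  ring

theorem vieta {H : Type*} [Field H] {t e n a b c : H} (ha : a ^ 3 - t * a ^ 2 + e * a - n = 0)
    (hb : b ^ 3 - t * b ^ 2 + e * b - n = 0) (hc : c ^ 3 - t * c ^ 2 + e * c - n = 0)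
    (hab : a ≠ b) (hac : a ≠ c) (hbc : b ≠ c) :
    a + b + c = t ∧ a * b + b * c + a * c = e ∧ a * b * c = n := by
  have h1 : a ^ 2 + a * b + b ^ 2 - t * (a + b) + e = 0 :=
    mul_left_cancel₀ (sub_ne_zero.2 hab) (by linear_combination ha - hb)
  have h2 : a ^ 2 + a * c + c ^ 2 - t * (a + c) + e = 0 :=
    mul_left_cancel₀ (sub_ne_zero.2 hac) (by linear_combination ha - hc)
  have h3 : a + b + c - t = 0 :=
    mul_left_cancel₀ (sub_ne_zero.2 hbc) (by linear_combination h1 - h2)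
  have h4 : a * b + b * c + a * c - e = 0 := by linear_combination (a + b) * h3 - h1
  refine ⟨sub_eq_zero.1 h3, sub_eq_zero.1 h4, ?_⟩
  linear_combination ha - a ^ 2 * h3 + a * h4

open Finset in
open Classical in
theorem cubic_count (hc : Module.finrank F H = 3) (t e n : F) (φ : H →ₐ[F] H)
    (hφ : φ = FiniteField.frobeniusAlgHom F H) :
    (#{y : H | y + φ y + φ (φ y) = algebraMap F H t ∧
        y * φ y + φ y * φ (φ y) + y * φ (φ y) = algebraMap F H e ∧
        y * φ y * φ (φ y) = algebraMap F H n} : ℤ)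
      + 3 * #{x : F | x ^ 3 - t * x ^ 2 + e * x - n = 0} =
    #{p : F × F × F | p.1 + p.2.1 + p.2.2 = t ∧
      p.1 * p.2.1 + p.2.1 * p.2.2 + p.1 * p.2.2 = e ∧
      p.1 * p.2.1 * p.2.2 = n} + 3 := by
  have hinj : Function.Injective (algebraMap F H) := (algebraMap F H).injective
  have hφinj : Function.Injective φ := φ.toRingHom.injective
  have h3 : ∀ y, φ (φ (φ y)) = y := by rw [hφ]; exact frob3 hc
  have hfix : ∀ y, φ y = y → ∃ x : F, algebraMap F H x = y := by
    intro y hy; apply frob_fix; rw [hφ] at hy; exact hy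
  by_cases hr : ∃ r : F, r ^ 3 - t * r ^ 2 + e * r - n = 0
  · obtain ⟨r, hr⟩ := hr
    -- elements counted on the left are equal to r
    have hA : ∀ y : H, (y + φ y + φ (φ y) = algebraMap F H t ∧
        y * φ y + φ y * φ (φ y) + y * φ (φ y) = algebraMap F H e ∧
        y * φ y * φ (φ y) = algebraMap F H n) ↔ (y = algebraMap F H r ∧ r + r + r = t ∧ r * r + r * r + r * r = e ∧ r * r * r = n) := by
      intro y
      constructor
      · rintro ⟨h1, h2, h3'⟩
        have hR := congrArg (algebraMap F H) hr
        simp only [map_sub, map_add, map_mul, map_pow, map_zero] at hR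
        set R := algebraMap F H r with hRdef
        have hφR : φ R = R := φ.commutes r
        have hy : y = R := by
          have : (R - y) * (R - φ y) * (R - φ (φ y)) = 0 := by
            rw [← h1, ← h2, ← h3'] at hR
            linear_combination hR
          rcases mul_eq_zero.1 this with h | h
          · rcases mul_eq_zero.1 h with h | h
            · exact (sub_eq_zero.1 h).symm
            · apply hφinj; rw [hφR]; exact (sub_eq_zero.1 h).symm
          · apply hφinj; apply hφinj; rw [hφR, hφR]; exact (sub_eq_zero.1 h).symm
        subst hy
        rw [hφR, hφR] at h1 h2 h3'
        refine ⟨rfl, hinj ?_, hinj ?_, hinj ?_⟩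
        · simp only [map_add, map_mul]; exact h1
        · simp only [map_add, map_mul]; exact h2
        · simp only [map_add, map_mul]; exact h3'
      · rintro ⟨rfl, rfl, rfl, rfl⟩
        rw [φ.commutes, φ.commutes]
        refine ⟨?_, ?_, ?_⟩ <;> simp only [map_add, map_mul]
    simp_rw [hA]
    have hcardA : (#{y : H | y = algebraMap F H r ∧ r + r + r = t ∧ r * r + r * r + r * r = e ∧ r * r * r = n} : ℤ) =
        if r + r + r = t ∧ r * r + r * r + r * r = e ∧ r * r * r = n then 1 else 0 := by
      split_ifs with h
      · have e0 : ({y : H | y = algebraMap F H r ∧ r + r + r = t ∧ r * r + r * r + r * r = e ∧ r * r * r = n} : Finset H) =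
            {algebraMap F H r} := by
          ext y; simp [h]
        rw [e0]; simp
      · simp [h]
    rw [hcardA]
    by_cases hq : ∃ v : F, v ^ 2 + (r - t) * v + (e + r * (r - t)) = 0
    · obtain ⟨v, hv⟩ := hq
      obtain ⟨w, hw⟩ : ∃ w, w = t - r - v := ⟨_, rfl⟩
      have ht : t = r + v + w := by rw [hw]; ring
      have he : e = r * v + v * w + r * w := by rw [hw]; linear_combination hv
      have hn : n = r * v * w := by
        rw [hw]; linear_combination -hr + r * hv
      have hs := aux_split r v w
      rw [ht, he, hn, ← hs, add_comm]
      congr 1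
      have : (r + r + r = r + v + w ∧ r * r + r * r + r * r = r * v + v * w + r * w ∧ r * r * r = r * v * w) ↔ (r = v ∧ r = w) := by
        constructor
        · rintro ⟨h1, h2, h3⟩
          have := aux_perm (r₁ := r) (r₂ := v) (r₃ := w) (u₁ := r) (u₂ := r) (u₃ := r)
            (by linear_combination h1) (by linear_combination h2) (by linear_combination h3)
          tauto
        · rintro ⟨rfl, rfl⟩
          refine ⟨by ring, by ring, by ring⟩
      simp only [this]
    · push Not at hq
      have e1 : ({x : F | x ^ 3 - t * x ^ 2 + e * x - n = 0} : Finset F) = {r} := by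
        ext x
        simp only [mem_filter, mem_univ, true_and, mem_singleton]
        constructor
        · intro hx
          have : (x - r) * (x ^ 2 + (r - t) * x + (e + r * (r - t))) = 0 := by
            linear_combination hx - hr
          rcases mul_eq_zero.1 this with h | h
          · exact sub_eq_zero.1 h
          · exact absurd h (hq x)
        · rintro rfl; exact hr
      have e2 : ({p : F × F × F | p.1 + p.2.1 + p.2.2 = t ∧
          p.1 * p.2.1 + p.2.1 * p.2.2 + p.1 * p.2.2 = e ∧
          p.1 * p.2.1 * p.2.2 = n} : Finset (F × F × F)) = ∅ := by
        ext ⟨u, v, w⟩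
        simp only [mem_filter, mem_univ, true_and, notMem_empty, iff_false]
        rintro ⟨h1, h2, h3⟩
        have hroot : (r - u) * (r - v) * (r - w) = 0 := by
          rw [← h1, ← h2, ← h3] at hr; linear_combination hr
        rcases mul_eq_zero.1 hroot with h | h
        · rcases mul_eq_zero.1 h with h | h
          · have h := sub_eq_zero.1 h
            subst h
            exact hq v (by rw [← h1, ← h2]; ring)
          · have h := sub_eq_zero.1 h
            subst h
            exact hq u (by rw [← h1, ← h2]; ring)
        · have h := sub_eq_zero.1 h
          subst h
          exact hq u (by rw [← h1, ← h2]; ring)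
      rw [e1, e2, if_neg]
      · simp
      · rintro ⟨h1, h2, h3⟩
        exact hq r (by rw [← h1, ← h2]; ring)
  · push Not at hr
    obtain ⟨y, hy⟩ := exists_root_ext (H := H) hc t e n hr
    have hy1 : φ y ^ 3 - algebraMap F H t * φ y ^ 2 + algebraMap F H e * φ y - algebraMap F H n = 0 := by
      have := congrArg φ hy
      simpa only [map_sub, map_add, map_mul, map_pow, map_zero, AlgHom.commutes] using this
    have hy2 : φ (φ y) ^ 3 - algebraMap F H t * φ (φ y) ^ 2 + algebraMap F H e * φ (φ y) - algebraMap F H n = 0 := by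
      have := congrArg φ hy1
      simpa only [map_sub, map_add, map_mul, map_pow, map_zero, AlgHom.commutes] using this
    have d1 : y ≠ φ y := by
      intro h
      obtain ⟨x, hx⟩ := hfix y h.symm
      apply hr x
      apply hinj
      simp only [map_sub, map_add, map_mul, map_pow, map_zero, hx, hy]
    have d2 : φ y ≠ φ (φ y) := fun h => d1 (hφinj h)
    have d3 : y ≠ φ (φ y) := by
      intro h
      apply d1
      conv_rhs => rw [h]
      rw [h3]
    obtain ⟨v1, v2, v3⟩ := vieta hy hy1 hy2 d1 d3 d2
    have e0 : ({y : H | y + φ y + φ (φ y) = algebraMap F H t ∧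
        y * φ y + φ y * φ (φ y) + y * φ (φ y) = algebraMap F H e ∧
        y * φ y * φ (φ y) = algebraMap F H n} : Finset H) = {y, φ y, φ (φ y)} := by
      ext z
      simp only [mem_filter, mem_univ, true_and, mem_insert, mem_singleton]
      constructor
      · rintro ⟨h1, h2, h3⟩
        rw [← v1] at h1
        rw [← v2] at h2
        rw [← v3] at h3
        have := aux_perm h1 h2 h3
        tauto
      · rintro (rfl | rfl | rfl)
        · exact ⟨v1, v2, v3⟩
        · rw [h3, ← v1, ← v2, ← v3]
          refine ⟨by ring, by ring, by ring⟩
        · rw [h3, ← v1, ← v2, ← v3]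
          refine ⟨by ring, by ring, by ring⟩
    have e1 : ({x : F | x ^ 3 - t * x ^ 2 + e * x - n = 0} : Finset F) = ∅ := by
      ext x; simp only [mem_filter, mem_univ, true_and, notMem_empty, iff_false]; exact hr x
    have e2 : ({p : F × F × F | p.1 + p.2.1 + p.2.2 = t ∧
          p.1 * p.2.1 + p.2.1 * p.2.2 + p.1 * p.2.2 = e ∧
          p.1 * p.2.1 * p.2.2 = n} : Finset (F × F × F)) = ∅ := by
      ext ⟨u, v, w⟩
      simp only [mem_filter, mem_univ, true_and, notMem_empty, iff_false]
      rintro ⟨h1, h2, h3⟩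
      apply hr u
      rw [← h1, ← h2, ← h3]; ring
    rw [e0, e1, e2]
    simp [d1, d2, d3]

open Finset in
open Classical in
theorem dh_count (hc : Module.finrank F H = 3) (t n : F) (hn : n ≠ 0) (φ : H →ₐ[F] H)
    (hφ : φ = FiniteField.frobeniusAlgHom F H) :
    (#{y : H | y + φ y + φ (φ y) = algebraMap F H t ∧ y * φ y * φ (φ y) = algebraMap F H n} : ℤ) =
    #{p : F × F × F | p.1 + p.2.1 + p.2.2 = t ∧ p.1 * p.2.1 * p.2.2 = n} + 3 := by
  have hinj : Function.Injective (algebraMap F H) := (algebraMap F H).injective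
  have h3 : ∀ y, φ (φ (φ y)) = y := by rw [hφ]; exact frob3 hc
  have hfix : ∀ y, φ y = y → ∃ x : F, algebraMap F H x = y := by
    intro y hy; apply frob_fix; rw [hφ] at hy; exact hy
  have hsum := Finset.sum_congr (rfl : (univ : Finset F) = univ) (fun e _ => cubic_count hc t e n φ hφ)
  simp only [sum_add_distrib, ← mul_sum] at hsum
  have A : (∑ e : F, #{y : H | y + φ y + φ (φ y) = algebraMap F H t ∧
        y * φ y + φ y * φ (φ y) + y * φ (φ y) = algebraMap F H e ∧
        y * φ y * φ (φ y) = algebraMap F H n}) =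
      #{y : H | y + φ y + φ (φ y) = algebraMap F H t ∧ y * φ y * φ (φ y) = algebraMap F H n} := by
    simp only [card_filter]
    rw [sum_comm]
    apply sum_congr rfl
    intro y _
    obtain ⟨e, he⟩ := hfix (y * φ y + φ y * φ (φ y) + y * φ (φ y)) (by
      simp only [map_add, map_mul, h3]; ring)
    rw [← he]
    simp only [hinj.eq_iff]
    rw [Finset.sum_eq_single e]
    · simp
    · intro b _ hb; rw [if_neg]; rintro ⟨_, h, _⟩; exact hb h.symm
    · simp
  have B : (∑ e : F, #{p : F × F × F | p.1 + p.2.1 + p.2.2 = t ∧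
      p.1 * p.2.1 + p.2.1 * p.2.2 + p.1 * p.2.2 = e ∧ p.1 * p.2.1 * p.2.2 = n}) =
      #{p : F × F × F | p.1 + p.2.1 + p.2.2 = t ∧ p.1 * p.2.1 * p.2.2 = n} := by
    simp only [card_filter]
    rw [sum_comm]
    apply sum_congr rfl
    intro p _
    rw [Finset.sum_eq_single (p.1 * p.2.1 + p.2.1 * p.2.2 + p.1 * p.2.2)]
    · simp
    · intro b _ hb; rw [if_neg]; rintro ⟨_, h, _⟩; exact hb h.symm
    · simp
  have C : (∑ e : F, #{x : F | x ^ 3 - t * x ^ 2 + e * x - n = 0}) + 1 = Fintype.card F := by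
    simp only [card_filter]
    rw [sum_comm]
    have : ∀ x : F, (∑ e : F, if x ^ 3 - t * x ^ 2 + e * x - n = 0 then 1 else 0) =
        if x = 0 then 0 else 1 := by
      intro x
      split_ifs with hx
      · subst hx
        simp [hn]
      · rw [Finset.sum_eq_single ((n + t * x ^ 2 - x ^ 3) / x)]
        · rw [if_pos]; field_simp; ring
        · intro b _ hb; rw [if_neg]; intro h; apply hb; field_simp; linear_combination h
        · simp
    simp only [this]
    rw [← card_univ, ← Finset.card_erase_add_one (mem_univ (0 : F)), ← Finset.filter_ne']
    rw [card_filter]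
    congr 1
    apply sum_congr rfl
    intro x _
    by_cases hx : x = 0 <;> simp [hx]
  rw [← A, ← B]
  push_cast
  simp only [sum_const, card_univ, nsmul_eq_mul] at hsum
  have C' : ((∑ e : F, #{x : F | x ^ 3 - t * x ^ 2 + e * x - n = 0} : ℕ) : ℤ) + 1 = Fintype.card F := by
    exact_mod_cast C
  push_cast at C'
  linarith

end DH

section PartFour
variable {F H : Type*} [Field F] [Fintype F] [Field H] [Fintype H] [Algebra F H]

open Classical in
theorem dh_count' (hc : Module.finrank F H = 3) (t n : F) (hn : n ≠ 0) :
    (Finset.card {y : H | Algebra.norm F y = n ∧ Algebra.trace F H y = t} : ℤ) =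
    Finset.card {p : F × F × F | p.1 * p.2.1 * p.2.2 = n ∧ p.1 + p.2.1 + p.2.2 = t} + 3 := by
  have hinj : Function.Injective (algebraMap F H) := (algebraMap F H).injective
  have h := dh_count hc t n hn (FiniteField.frobeniusAlgHom F H) rfl
  simp only [and_comm] at h ⊢
  rw [← h]
  congr 2
  ext y
  rw [Finset.mem_filter, Finset.mem_filter]
  have h1 : algebraMap F H (Algebra.norm F y) = y * FiniteField.frobeniusAlgHom F H y *
      FiniteField.frobeniusAlgHom F H (FiniteField.frobeniusAlgHom F H y) := by
    rw [FiniteField.algebraMap_norm_eq_prod_pow, hc, Finset.prod_range_succ, Finset.prod_range_succ,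
      Finset.prod_range_one]
    simp [sq, pow_mul]
  have h2 : algebraMap F H (Algebra.trace F H y) = y + FiniteField.frobeniusAlgHom F H y +
      FiniteField.frobeniusAlgHom F H (FiniteField.frobeniusAlgHom F H y) := by
    rw [FiniteField.algebraMap_trace_eq_sum_pow, hc, Finset.sum_range_succ, Finset.sum_range_succ,
      Finset.sum_range_one]
    simp [sq, pow_mul]
  rw [← h1, ← h2, hinj.eq_iff, hinj.eq_iff]
  tauto

variable [Algebra (ZMod 2) F] [Algebra (ZMod 2) H]

theorem psi_trace (y : H) : psi H y = psi F (Algebra.trace F H y) := by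
  have : IsScalarTower (ZMod 2) F H := IsScalarTower.of_algebraMap_eq' (Subsingleton.elim _ _)
  unfold psi
  rw [Algebra.trace_trace]

open Classical in
theorem dh_sum (hc : Module.finrank F H = 3) (n : F) (hn : n ≠ 0) :
    ∑ y : H with Algebra.norm F y = n, psi H y =
    ∑ p : F × F × F with p.1 * p.2.1 * p.2.2 = n, psi F (p.1 + p.2.1 + p.2.2) := by
  rw [← Finset.sum_fiberwise _ (fun y : H => Algebra.trace F H y),
    ← Finset.sum_fiberwise _ (fun p : F × F × F => p.1 + p.2.1 + p.2.2)]
  have hz : ∑ t : F, psi F t * 3 = 0 := by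
    have := psi_ortho (1 : F)
    simp only [one_mul, one_ne_zero, if_false] at this
    rw [← Finset.sum_mul, this, zero_mul]
  conv_rhs => rw [← add_zero (∑ j : F, _), ← hz, ← Finset.sum_add_distrib]
  apply Finset.sum_congr rfl
  intro t _
  have e1 : ∑ y : H with Algebra.norm F y = n ∧ Algebra.trace F H y = t, psi H y =
      psi F t * (Finset.card {y : H | Algebra.norm F y = n ∧ Algebra.trace F H y = t} : ℤ) := by
    rw [mul_comm, ← nsmul_eq_mul, ← Finset.sum_const]
    apply Finset.sum_congr rfl
    intro y hy
    rw [psi_trace (F := F), (Finset.mem_filter.1 hy).2.2]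
  have e2 : ∑ p : F × F × F with p.1 * p.2.1 * p.2.2 = n ∧ p.1 + p.2.1 + p.2.2 = t, psi F (p.1 + p.2.1 + p.2.2) =
      psi F t * (Finset.card {p : F × F × F | p.1 * p.2.1 * p.2.2 = n ∧ p.1 + p.2.1 + p.2.2 = t} : ℤ) := by
    rw [mul_comm, ← nsmul_eq_mul, ← Finset.sum_const]
    apply Finset.sum_congr rfl
    intro y hy
    rw [(Finset.mem_filter.1 hy).2.2]
  rw [Finset.filter_filter, Finset.filter_filter, e1, e2, dh_count' hc t n hn]
  ring

open Classical in
theorem sum_ne_zero (f : F → ℤ) : ∑ x : F with x ≠ 0, f x = ∑ x : F, f x - f 0 := by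
  rw [Finset.filter_ne', ← Finset.add_sum_erase Finset.univ f (Finset.mem_univ 0)]
  ring

open Classical in
theorem psi_sum_ne : ∑ x : F with x ≠ 0, psi F x = -1 := by
  have := psi_ortho (1 : F)
  simp only [one_mul, one_ne_zero, if_false] at this
  rw [sum_ne_zero, this, psi_zero]; rfl

open Classical in
theorem inner_w (s : ℕ) (hs : 1 ≤ s) (hF : Fintype.card F = 2 ^ (3 * s)) (k : F) (hk : k ≠ 0) :
    ∑ w : F with w ≠ 0 ∧ trFE s (k * w) = 0, psi F w =
      (if k ^ (2 ^ s) = k then 2 ^ (2 * s) else 0) - 1 := by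
  have h := hyper_gen s hs hF 1 k hk
  simp only [one_mul, one_div, inv_pow, inv_inj] at h
  rw [← h, Finset.sum_filter, Finset.sum_filter, ← Finset.add_sum_erase _ _ (Finset.mem_univ (0 : F)),
    ← Finset.add_sum_erase (Finset.univ : Finset F) (fun w => if trFE s (k * w) = 0 then psi F w else 0)
      (Finset.mem_univ (0 : F))]
  simp only [ne_eq, not_true_eq_false, false_and, if_false, mul_zero, tr_zero, if_true, psi_zero]
  rw [zero_add, add_sub_cancel_left]
  apply Finset.sum_congr rfl
  intro w hw
  simp [Finset.ne_of_mem_erase hw]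

open Classical in
theorem inner_v (s : ℕ) (hs : 1 ≤ s) (hF : Fintype.card F = 2 ^ (3 * s)) (k : F) (hk : k ≠ 0) :
    ∑ v : F with v ≠ 0 ∧ (k * v) ^ (2 ^ s) = k * v, psi F v =
      (if trFE s k⁻¹ = 0 then 2 ^ s else 0) - 1 := by
  have hE0 : (0 : F) ∈ Efin F s := by rw [mem_Efin, zero_pow (by positivity)]
  rw [← sumE s hs hF, ← Finset.add_sum_erase _ _ hE0, zero_mul, psi_zero, add_sub_cancel_left]
  apply Finset.sum_nbij' (fun v => k * v) (fun e => e * k⁻¹)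
  · intro v hv
    have := (Finset.mem_filter.1 hv).2
    rw [Finset.mem_erase, mem_Efin]
    exact ⟨mul_ne_zero hk this.1, this.2⟩
  · intro e he
    rw [Finset.mem_erase, mem_Efin] at he
    refine Finset.mem_filter.2 ⟨Finset.mem_univ _, mul_ne_zero he.1 (inv_ne_zero hk), ?_⟩
    have : k * (e * k⁻¹) = e := by field_simp
    rw [this, he.2]
  · intro v _; field_simp
  · intro v _; field_simp
  · intro v _; congr 1; field_simp

open Classical in
theorem triple_sum (s : ℕ) (hs : 1 ≤ s) (hF : Fintype.card F = 2 ^ (3 * s)) (c : F) (hc0 : c ≠ 0) :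
    ∑ p : F × F × F with p.1 * p.2.1 * p.2.2 ≠ 0 ∧ trFE s (c * (p.1 * p.2.1 * p.2.2)) = 0,
      psi F (p.1 + p.2.1 + p.2.2) =
    2 ^ (2 * s) - 1 + 2 ^ (3 * s) * ∑ u : F with u ≠ 0 ∧ trFE s (c * u)⁻¹ = 0, psi F u := by
  have step1 : ∑ p : F × F × F with p.1 * p.2.1 * p.2.2 ≠ 0 ∧ trFE s (c * (p.1 * p.2.1 * p.2.2)) = 0,
      psi F (p.1 + p.2.1 + p.2.2) =
      ∑ u : F with u ≠ 0, ∑ v : F with v ≠ 0, ∑ w : F with w ≠ 0 ∧ trFE s (c * u * v * w) = 0,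
        psi F u * psi F v * psi F w := by
    simp only [Finset.sum_filter]
    rw [Fintype.sum_prod_type]
    apply Finset.sum_congr rfl
    intro u _
    rw [Fintype.sum_prod_type]
    by_cases hu : u = 0
    · simp [hu]
    · simp only [ne_eq, hu, not_false_eq_true, if_true]
      apply Finset.sum_congr rfl
      intro v _
      by_cases hv : v = 0
      · simp [hv]
      · simp only [ne_eq, hv, not_false_eq_true, if_true]
        apply Finset.sum_congr rfl
        intro w _
        have : c * (u * v * w) = c * u * v * w := by ring
        simp only [this, mul_eq_zero, hu, hv, false_or, psi_add]
  rw [step1]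
  have step2 : ∀ u : F, u ≠ 0 → ∑ v : F with v ≠ 0, ∑ w : F with w ≠ 0 ∧ trFE s (c * u * v * w) = 0,
        psi F u * psi F v * psi F w =
      psi F u * (2 ^ (2 * s) * ((if trFE s (c * u)⁻¹ = 0 then 2 ^ s else 0) - 1) + 1) := by
    intro u hu
    have hk : c * u ≠ 0 := mul_ne_zero hc0 hu
    have : ∀ v ∈ ({v : F | v ≠ 0} : Finset F), ∑ w : F with w ≠ 0 ∧ trFE s (c * u * v * w) = 0,
        psi F u * psi F v * psi F w =
        psi F u * (2 ^ (2 * s) * (if (c * u * v) ^ (2 ^ s) = c * u * v then psi F v else 0) - psi F v) := by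
      intro v hv
      rw [← Finset.mul_sum, inner_w s hs hF _ (mul_ne_zero hk (Finset.mem_filter.1 hv).2)]
      split_ifs <;> ring
    rw [Finset.sum_congr rfl this, ← Finset.mul_sum, Finset.sum_sub_distrib, psi_sum_ne, ← Finset.mul_sum,
      ← Finset.sum_filter, Finset.filter_filter, inner_v s hs hF _ hk]
    ring
  rw [Finset.sum_congr rfl (fun u hu => step2 u (Finset.mem_filter.1 hu).2)]
  have step3 : ∀ u : F, psi F u * (2 ^ (2 * s) * ((if trFE s (c * u)⁻¹ = 0 then 2 ^ s else 0) - 1) + 1) =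
      2 ^ (3 * s) * (if trFE s (c * u)⁻¹ = 0 then psi F u else 0) - (2 ^ (2 * s) - 1) * psi F u := by
    intro u
    split_ifs <;> ring
  simp only [step3]
  rw [Finset.sum_sub_distrib, ← Finset.mul_sum, ← Finset.mul_sum, psi_sum_ne, ← Finset.sum_filter,
    Finset.filter_filter]
  ring

open Classical in
theorem main_sum (s : ℕ) (hs : 1 ≤ s) (hF : Fintype.card F = 2 ^ (3 * s)) (hc : Module.finrank F H = 3)
    (c : F) (hc0 : c ≠ 0) :
    ∑ y : H with y ≠ 0 ∧ trFE s (c * Algebra.norm F y) = 0, psi H y =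
    2 ^ (2 * s) - 1 + 2 ^ (3 * s) * psiSum F c⁻¹ (Dset F s) := by
  have h1 : psiSum F c⁻¹ (Dset F s) = ∑ u : F with u ≠ 0 ∧ trFE s (c * u)⁻¹ = 0, psi F u := by
    rw [psiSum_eq]
    apply Finset.sum_nbij' (fun x => c⁻¹ * x) (fun u => c * u)
    · intro x hx
      have hx' : x ≠ 0 ∧ trFE s x⁻¹ = 0 := (Finset.mem_filter.1 hx).2
      refine Finset.mem_filter.2 ⟨Finset.mem_univ _, mul_ne_zero (inv_ne_zero hc0) hx'.1, ?_⟩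
      rw [mul_inv_cancel_left₀ hc0]; exact hx'.2
    · intro x hx
      have hx' := (Finset.mem_filter.1 hx).2
      exact Finset.mem_filter.2 ⟨Finset.mem_univ _, mul_ne_zero hc0 hx'.1, hx'.2⟩
    · intro x _; field_simp
    · intro x _; field_simp
    · intro x _; rfl
  rw [h1, ← triple_sum s hs hF c hc0]
  rw [← Finset.sum_fiberwise _ (fun y : H => Algebra.norm F y),
    ← Finset.sum_fiberwise _ (fun p : F × F × F => p.1 * p.2.1 * p.2.2)]
  apply Finset.sum_congr rfl
  intro n _
  rw [Finset.filter_filter, Finset.filter_filter]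
  by_cases hn : n ≠ 0 ∧ trFE s (c * n) = 0
  · have hd := dh_sum (H := H) hc n hn.1
    convert hd using 2
    · ext y
      simp only [Finset.mem_filter, Finset.mem_univ, true_and]
      constructor
      · exact fun h => h.2
      · rintro rfl
        exact ⟨⟨fun h => hn.1 (by rw [h, Algebra.norm_zero]), hn.2⟩, rfl⟩
    · ext y
      simp only [Finset.mem_filter, Finset.mem_univ, true_and]
      constructor
      · exact fun h => h.2
      · rintro rfl
        exact ⟨hn, rfl⟩
  · rw [Finset.filter_false_of_mem, Finset.filter_false_of_mem]
    · simp
    · rintro p _ ⟨h, rfl⟩; exact hn h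
    · rintro y _ ⟨h, rfl⟩
      exact hn ⟨fun h' => h.1 (Algebra.norm_eq_zero_iff.1 h'), h.2⟩

end PartFour

section PartFive
variable {F : Type*} [Field F] [Fintype F] [Algebra (ZMod 2) F]

theorem omega_M_pow (s : ℕ) (hF : Fintype.card F = 2 ^ (3 * s)) (ω : F) (t : ℤ) :
    (ω ^ ((Mof s : ℤ) * t)) ^ (2 ^ s) = ω ^ ((Mof s : ℤ) * t) := by
  have h : (ω ^ (Mof s)) ^ (2 ^ s) = ω ^ (Mof s) := by
    unfold Mof
    rw [pow_succ, pow_add, mul_pow, mul_pow, pow_q2, pow_q3 s hF]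
    ring
  rw [zpow_mul, zpow_natCast, ← zpow_natCast, ← zpow_mul, mul_comm t, zpow_mul, zpow_natCast, h]

theorem Sa_ncard (s : ℕ) (ω : F) (a : ℤ) : (Sa s ω a).ncard = (Sfin s (ω ^ a)).card := by
  rw [← Set.ncard_coe_finset]
  congr 1
  ext u
  rw [Finset.mem_coe, mem_Sfin]
  rfl

theorem Sfin_shift (s : ℕ) (hF : Fintype.card F = 2 ^ (3 * s)) (ω : F) (h0 : ω ≠ 0) (a t : ℤ) :
    Sfin s (ω ^ (a + (Mof s : ℤ) * t)) = Sfin s (ω ^ a) := by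
  ext u
  rw [mem_Sfin, mem_Sfin, zpow_add₀ h0, mul_comm (ω ^ a), mul_assoc,
    tr_smul s (omega_M_pow s hF ω t), mul_eq_zero_iff_left (zpow_ne_zero _ h0)]

instance neZeroM (s : ℕ) : NeZero (Mof s) := ⟨Nat.succ_ne_zero _⟩

theorem exists_shift (s : ℕ) (a : ℤ) : ∃ t : ℤ, a = ((a : ZMod (Mof s)).val : ℤ) + (Mof s : ℤ) * t := by
  refine ⟨a / (Mof s : ℤ), ?_⟩
  rw [ZMod.val_intCast]
  exact (Int.emod_add_mul_ediv a _).symm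

theorem Sa_val (s : ℕ) (hF : Fintype.card F = 2 ^ (3 * s)) (ω : F) (h0 : ω ≠ 0) (a : ℤ) :
    (Sa s ω ((a : ZMod (Mof s)).val : ℤ)).ncard = (Sfin s (ω ^ a)).card := by
  obtain ⟨t, ht⟩ := exists_shift s a
  rw [Sa_ncard]
  conv_rhs => rw [ht]
  rw [Sfin_shift s hF ω h0]

theorem mem_T1 (s : ℕ) (hs : 1 ≤ s) (hF : Fintype.card F = 2 ^ (3 * s)) (ω : F) (h0 : ω ≠ 0) (a : ℤ) :
    (a : ZMod (Mof s)) ∈ T1 s ω ↔ trFE s (ω ^ a) = 0 := by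
  rw [← Sfin_iff s hs hF (zpow_ne_zero a h0), ← Sa_val s hF ω h0]
  rfl

theorem mem_Rclass {K : Type*} [Field K] (s : ℕ) (g : K) (T : Set (ZMod (Mof s))) (x : K) :
    x ∈ Rclass s g T ↔ ∃ a : ℤ, (a : ZMod (Mof s)) ∈ T ∧ x = g ^ a := by
  unfold Rclass
  simp only [Set.mem_iUnion]
  constructor
  · rintro ⟨i, hi, t, ht⟩
    refine ⟨_, ?_, ht⟩
    rw [Int.cast_add, Int.cast_mul, Int.cast_natCast, Int.cast_natCast, ZMod.natCast_self, zero_mul,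
      add_zero, ZMod.natCast_zmod_val]
    exact hi
  · rintro ⟨a, ha, rfl⟩
    obtain ⟨t, ht⟩ := exists_shift s a
    exact ⟨_, ha, t, by rw [← ht]⟩

open Classical in
theorem first_part (s : ℕ) (hs : 1 ≤ s) (F H : Type*) [Field F] [Fintype F] [Algebra (ZMod 2) F]
    [Field H] [Fintype H] [Algebra (ZMod 2) H]
    (hF : Fintype.card F = 2 ^ (3 * s)) (hH : Fintype.card H = 2 ^ (9 * s))
    (f : F →+* H) (β : H) (hβ : ∀ x : H, x ≠ 0 → ∃ n : ℕ, x = β ^ n) (hb0 : β ≠ 0)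
    (ω : F) (h0 : ω ≠ 0) (hω : f ω = β ^ (1 + 2 ^ (3 * s) + 2 ^ (6 * s))) (a : ℤ) :
      psiSum H (β ^ a) (Rclass s β (T1 s ω)) =
        2 ^ (2 * s) - 1 + 2 ^ (3 * s) * psiSum F (ω ^ a) (Dset F s) := by
  letI : Algebra F H := f.toAlgebra
  have hc : Module.finrank F H = 3 := by
    have h := Module.card_eq_pow_finrank (K := F) (V := H)
    rw [hF, hH, ← pow_mul] at h
    have h2 := Nat.pow_right_injective (le_refl 2) h
    have h3 : 3 * s * 3 = 3 * s * Module.finrank F H := by rw [← h2]; ring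
    exact (Nat.eq_of_mul_eq_mul_left (by omega) h3).symm
  have hn : Algebra.norm F β = ω := by
    apply (algebraMap F H).injective
    rw [FiniteField.algebraMap_norm_eq_pow_sum, hc, Nat.card_eq_fintype_card, hF]
    change _ = f ω
    rw [hω]
    congr 1
    rw [Finset.sum_range_succ, Finset.sum_range_succ, Finset.sum_range_one,
      pow_zero, pow_one, ← pow_mul]
    congr 2
    ring
  have hnz : ∀ n : ℤ, Algebra.norm F (β ^ n) = ω ^ n := by
    intro n
    have hN := map_zpow₀ ({ Algebra.norm F with map_zero' := Algebra.norm_zero } : H →*₀ F) β n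
    change Algebra.norm F (β ^ n) = (Algebra.norm F β) ^ n at hN
    rw [hN, hn]
  have hR : ∀ x : H, x ∈ Rclass s β (T1 s ω) ↔ x ≠ 0 ∧ trFE s (Algebra.norm F x) = 0 := by
    intro x
    rw [mem_Rclass]
    constructor
    · rintro ⟨n, hn, rfl⟩
      exact ⟨zpow_ne_zero _ hb0, by rw [hnz]; exact (mem_T1 s hs hF ω h0 n).1 hn⟩
    · rintro ⟨hx, hx2⟩
      obtain ⟨n, rfl⟩ := hβ x hx
      rw [← zpow_natCast, hnz] at hx2
      exact ⟨n, (mem_T1 s hs hF ω h0 n).2 hx2, (zpow_natCast _ _).symm⟩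
  have hm := main_sum (H := H) s hs hF hc (ω ^ a)⁻¹ (inv_ne_zero (zpow_ne_zero a h0))
  rw [inv_inv] at hm
  rw [← hm, psiSum_eq]
  have hba : β ^ a ≠ 0 := zpow_ne_zero a hb0
  have hwa : ω ^ a ≠ 0 := zpow_ne_zero a h0
  apply Finset.sum_nbij' (fun x => β ^ a * x) (fun x => (β ^ a)⁻¹ * x)
  · intro x hx
    have hx' := (hR x).1 (Finset.mem_filter.1 hx).2
    refine Finset.mem_filter.2 ⟨Finset.mem_univ _, mul_ne_zero hba hx'.1, ?_⟩
    rw [map_mul, hnz, inv_mul_cancel_left₀ hwa]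
    exact hx'.2
  · intro y hy
    have hy' := (Finset.mem_filter.1 hy).2
    refine Finset.mem_filter.2 ⟨Finset.mem_univ _, (hR _).2 ⟨mul_ne_zero (inv_ne_zero hba) hy'.1, ?_⟩⟩
    rw [map_mul, ← zpow_neg, hnz, zpow_neg]
    exact hy'.2
  · intro x _; exact inv_mul_cancel_left₀ hba x
  · intro x _; exact mul_inv_cancel_left₀ hba x
  · intro x _; rfl

end PartFive

theorem statement17 (s : ℕ) (hs : 1 ≤ s) (F H : Type*) [Field F] [Fintype F] [Algebra (ZMod 2) F]
    [Field H] [Fintype H] [Algebra (ZMod 2) H]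
    (hF : Fintype.card F = 2 ^ (3 * s)) (hH : Fintype.card H = 2 ^ (9 * s))
    (f : F →+* H) (β : H) (hβ : ∀ x : H, x ≠ 0 → ∃ n : ℕ, x = β ^ n)
    (ω : F) (hω : f ω = β ^ (1 + 2 ^ (3 * s) + 2 ^ (6 * s)))
    (hωgen : ∀ x : F, x ≠ 0 → ∃ n : ℕ, x = ω ^ n) :
    ∀ a : ℤ,
      psiSum H (β ^ a) (Rclass s β (T1 s ω)) =
        2 ^ (2 * s) - 1 + 2 ^ (3 * s) * psiSum F (ω ^ a) (Dset F s) ∧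
      ((a : ZMod (Mof s)) ∈ T1 s ω →
        psiSum H (β ^ a) (Rclass s β (T1 s ω)) = -(2 ^ (3 * s)) + 2 ^ (2 * s) - 1) ∧
      ((a : ZMod (Mof s)) ∈ T2 s ω →
        psiSum H (β ^ a) (Rclass s β (T1 s ω)) = 2 ^ (3 * s) * (2 ^ s - 1) + 2 ^ (2 * s) - 1) ∧
      ((a : ZMod (Mof s)) ∈ T3 s ω →
        psiSum H (β ^ a) (Rclass s β (T1 s ω)) = -((2 ^ s + 1) * (2 ^ (3 * s) - 2 ^ s + 1))) := by
  have hb0 : β ≠ 0 := by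
    rintro rfl
    have hsub : ∀ x : H, x ≠ 0 → x = 1 := by
      intro x hx
      obtain ⟨n, rfl⟩ := hβ x hx
      rcases Nat.eq_zero_or_pos n with rfl | hn
      · simp
      · exact absurd (zero_pow hn.ne') hx
    have hle : Fintype.card H ≤ Fintype.card Bool := by
      classical
      apply Fintype.card_le_of_injective (fun x : H => decide (x = 0))
      intro x y hxy
      by_cases hx : x = 0
      · by_cases hy : y = 0
        · rw [hx, hy]
        · simp [hx, hy] at hxy
      · by_cases hy : y = 0
        · simp [hx, hy] at hxy
        · rw [hsub x hx, hsub y hy]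
    rw [hH, Fintype.card_bool] at hle
    have : 2 ^ 9 ≤ 2 ^ (9 * s) := Nat.pow_le_pow_right (by norm_num) (by omega)
    omega
  have h0 : ω ≠ 0 := by
    rintro rfl
    rw [map_zero] at hω
    exact pow_ne_zero _ hb0 hω.symm
  intro a
  have h1 := first_part s hs F H hF hH f β hβ hb0 ω h0 hω a
  have hD := sumD s hs hF (ω ^ a)
  have hSa := Sa_val s hF ω h0 a
  have hq : (2 : ℤ) ^ s - 1 ≠ 0 := by
    have : (2 : ℤ) ≤ 2 ^ s := by exact_mod_cast two_le_q s hs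
    omega
  have hcast : ((2 ^ s - 1 : ℕ) : ℤ) = 2 ^ s - 1 := by
    rw [Nat.cast_sub Nat.one_le_two_pow]; push_cast; rfl
  have e2 : (2 : ℤ) ^ (2 * s) = (2 ^ s) ^ 2 := by rw [← pow_mul, mul_comm]
  have e3 : (2 : ℤ) ^ (3 * s) = (2 ^ s) ^ 3 := by rw [← pow_mul, mul_comm]
  refine ⟨h1, ?_, ?_, ?_⟩
  · intro ha
    have hk : (Sfin s (ω ^ a)).card = 2 ^ s - 1 := hSa ▸ ha
    rw [hk, hcast, e2] at hD
    have : psiSum F (ω ^ a) (Dset F s) = -1 := by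
      apply mul_left_cancel₀ hq
      rw [hD]; ring
    rw [h1, this]; ring
  · intro ha
    have hk : (Sfin s (ω ^ a)).card = 2 * (2 ^ s - 1) := hSa ▸ ha
    rw [hk, Nat.cast_mul, hcast, e2] at hD
    have : psiSum F (ω ^ a) (Dset F s) = 2 ^ s - 1 := by
      apply mul_left_cancel₀ hq
      rw [hD]; push_cast; ring
    rw [h1, this]; ring
  · intro ha
    have hk : (Sfin s (ω ^ a)).card = 0 := hSa ▸ ha
    rw [hk, e2] at hD
    have : psiSum F (ω ^ a) (Dset F s) = -(2 ^ s + 1) := by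
      apply mul_left_cancel₀ hq
      rw [hD]; push_cast; ring
    rw [h1, this, e2, e3]; ring
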